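/- Under the setting of the PIPG iteration (P symmetric positive semidefinite, D nonempty closed convex, K nonempty closed convex cone, step size α satisfying 0 < α ≤ (8 − 4/γ)/(√(λ² + 16ν²) + λ) for some γ ∈ (1/2, 1), λ ≥ ‖P‖, ν ≥ ‖H‖), let z̄ = lim_{j→∞}(z^j − z^{j−1}) and w̄ = lim_{j→∞}(w^j − w^{j−1}) be the limits of consecutive differences of the PIPG iterates. If ‖z̄‖ = ‖w̄‖ = 0, then lim_{j→∞} d(−P z^j − q − Hᵀ w^j | N_D(z^j)) = 0 and lim_{j→∞} d(H z^j − g | N_{K°}(w^j)) = 0. -/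

import Mathlib

open scoped RealInnerProductSpace
open Filter Topology Metric ContinuousLinearMap

/-- Projection onto a set: the unique nearest point, when it exists
(it exists and is unique for nonempty closed convex sets in Euclidean space). -/
noncomputable def proj {E : Type*} [NormedAddCommGroup E] [InnerProductSpace ℝ E]
    (S : Set E) (x : E) : E :=
  open Classical in
  if h : ∃ y, y ∈ S ∧ ∀ z ∈ S, ‖x - y‖ ≤ ‖x - z‖ then h.choose else 0

/-- The polar cone `K° = {w | ⟪w, y⟫ ≤ 0 for all y ∈ K}`. -/
def polarCone {E : Type*} [NormedAddCommGroup E] [InnerProductSpace ℝ E]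
    (K : Set E) : Set E := {w | ∀ y ∈ K, ⟪w, y⟫ ≤ 0}

/-- The recession cone `rec D = {y | y + z ∈ D for all z ∈ D}`. -/
def recCone {E : Type*} [NormedAddCommGroup E] (D : Set E) : Set E :=
  {y | ∀ z ∈ D, y + z ∈ D}

/-- The normal cone of `D` at `z`: `N_D(z) = {y | ⟪y, z' - z⟫ ≤ 0 for all z' ∈ D}`. -/
def normalCone {E : Type*} [NormedAddCommGroup E] [InnerProductSpace ℝ E]
    (D : Set E) (z : E) : Set E := {y | ∀ z' ∈ D, ⟪y, z' - z⟫ ≤ 0}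

/-!
A projection step `x⁺ = π_S[x + α d]` certifies `d - (x⁺ - x) / α ∈ N_S(x⁺)`, because
`x + α d - x⁺ ∈ N_S(x⁺)` and a cone is closed under scaling by `1 / α`. Hence a vector `r` lies
within `‖r - d‖ + ‖x⁺ - x‖ / α` of `N_S(x⁺)`. In both PIPG updates the direction `d` used in a step
differs from the optimality residual `r` at the new iterate by a continuous linear image of
consecutive differences of the `z` iterates, which vanish in the limit.
-/

theorem norm_sub_eq_iInf_iff {E : Type*} [SeminormedAddCommGroup E] {S : Set E} {x y : E}
    (hy : y ∈ S) :
    ‖x - y‖ = ⨅ z : S, ‖x - z‖ ↔ ∀ z ∈ S, ‖x - y‖ ≤ ‖x - z‖ := by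
  have : Nonempty S := ⟨⟨y, hy⟩⟩
  have hbdd : BddBelow (Set.range fun z : S => ‖x - z‖) :=
    ⟨0, Set.forall_mem_range.2 fun _ => norm_nonneg _⟩
  constructor
  · intro h z hz
    exact h.trans_le (ciInf_le hbdd ⟨z, hz⟩)
  · intro h
    exact le_antisymm (le_ciInf fun z => h z z.2) (ciInf_le hbdd ⟨y, hy⟩)

section InnerProductSpace

variable {E : Type*} [NormedAddCommGroup E] [InnerProductSpace ℝ E] {S : Set E}

section PolarCone

theorem polarCone_eq_iInter (K : Set E) : polarCone K = ⋂ y ∈ K, {w | ⟪w, y⟫ ≤ 0} := by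
  ext w
  simp only [polarCone, Set.mem_ofPred_eq, Set.mem_iInter]

theorem polarCone_nonempty (K : Set E) : (polarCone K).Nonempty :=
  ⟨0, fun y _ => (inner_zero_left y).le⟩

theorem isClosed_polarCone (K : Set E) : IsClosed (polarCone K) := by
  rw [polarCone_eq_iInter]
  exact isClosed_biInter fun y _ => isClosed_le (by fun_prop) continuous_const

theorem convex_polarCone (K : Set E) : Convex ℝ (polarCone K) := by
  rw [polarCone_eq_iInter]
  exact convex_iInter₂ fun y _ => convex_halfSpace_le ((innerₗ E).flip y).isLinear 0

end PolarCone

section Projection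

theorem proj_mem_and_forall_norm_sub_le (hne : S.Nonempty) (hcomplete : IsComplete S)
    (hconv : Convex ℝ S) (x : E) :
    proj S x ∈ S ∧ ∀ z ∈ S, ‖x - proj S x‖ ≤ ‖x - z‖ := by
  have hex : ∃ y, y ∈ S ∧ ∀ z ∈ S, ‖x - y‖ ≤ ‖x - z‖ := by
    obtain ⟨y, hy, hmin⟩ := exists_norm_eq_iInf_of_complete_convex hne hcomplete hconv x
    exact ⟨y, hy, (norm_sub_eq_iInf_iff hy).1 hmin⟩
  rw [_root_.proj, dif_pos hex]
  exact hex.choose_spec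

theorem sub_proj_mem_normalCone (hne : S.Nonempty) (hcomplete : IsComplete S)
    (hconv : Convex ℝ S) (x : E) : x - proj S x ∈ normalCone S (proj S x) := by
  obtain ⟨hmem, hmin⟩ := proj_mem_and_forall_norm_sub_le hne hcomplete hconv x
  exact (norm_eq_iInf_iff_real_inner_le_zero hconv hmem).1 ((norm_sub_eq_iInf_iff hmem).2 hmin)

theorem smul_mem_normalCone {x y : E} {a : ℝ} (ha : 0 ≤ a) (hy : y ∈ normalCone S x) :
    a • y ∈ normalCone S x := by
  intro z hz
  rw [real_inner_smul_left]
  exact mul_nonpos_of_nonneg_of_nonpos ha (hy z hz)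

theorem sub_inv_smul_proj_sub_mem_normalCone (hne : S.Nonempty) (hcomplete : IsComplete S)
    (hconv : Convex ℝ S) {α : ℝ} (hα : 0 < α) (x d : E) :
    d - α⁻¹ • (proj S (x + α • d) - x) ∈ normalCone S (proj S (x + α • d)) := by
  have hscaled := smul_mem_normalCone (inv_nonneg.2 hα.le)
    (sub_proj_mem_normalCone hne hcomplete hconv (x + α • d))
  convert hscaled using 1
  rw [add_sub_right_comm, smul_add, inv_smul_smul₀ hα.ne', ← neg_sub x, smul_neg, sub_neg_eq_add,
    add_comm]

theorem tendsto_infDist_normalCone_of_proj_step (hne : S.Nonempty) (hcomplete : IsComplete S)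
    (hconv : Convex ℝ S) {α : ℝ} (hα : 0 < α) {x d r : ℕ → E}
    (hstep : ∀ j, x (j + 1) = proj S (x j + α • d j))
    (hx : Tendsto (fun j => x (j + 1) - x j) atTop (𝓝 0))
    (hr : Tendsto (fun j => r (j + 1) - d j) atTop (𝓝 0)) :
    Tendsto (fun j => infDist (r j) (normalCone S (x j))) atTop (𝓝 0) := by
  rw [← tendsto_add_atTop_iff_nat 1]
  have hbound : ∀ j, infDist (r (j + 1)) (normalCone S (x (j + 1))) ≤
      ‖(r (j + 1) - d j) + α⁻¹ • (x (j + 1) - x j)‖ := by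
    intro j
    have hmem := sub_inv_smul_proj_sub_mem_normalCone hne hcomplete hconv hα (x j) (d j)
    rw [← hstep] at hmem
    simpa only [dist_eq_norm, sub_sub_eq_add_sub, add_sub_right_comm]
      using infDist_le_dist_of_mem (x := r (j + 1)) hmem
  refine squeeze_zero (fun _ => infDist_nonneg) hbound ?_
  simpa only [smul_zero, add_zero, norm_zero] using (hr.add (hx.const_smul α⁻¹)).norm

end Projection

end InnerProductSpace

theorem stmt5_general {E F : Type*} [NormedAddCommGroup E] [InnerProductSpace ℝ E]
    [CompleteSpace E] [NormedAddCommGroup F] [InnerProductSpace ℝ F] [CompleteSpace F]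
    {P : E →L[ℝ] E} {q : E} {H : E →L[ℝ] F} {g : F} {D : Set E} {C : Set F}
    (hDne : D.Nonempty) (hDcl : IsClosed D) (hDconv : Convex ℝ D)
    (hCne : C.Nonempty) (hCcl : IsClosed C) (hCconv : Convex ℝ C)
    {α : ℝ} (hα : 0 < α) {w v : ℕ → F} {z : ℕ → E}
    (hw : ∀ j, w (j + 1) = proj C (v j + α • (H (z j) - g)))
    (hz : ∀ j, z (j + 1) = proj D (z j - α • (P (z j) + q + adjoint H (w (j + 1)))))
    (hv : ∀ j, v (j + 1) = w (j + 1) + α • H (z (j + 1) - z j))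
    (hzlim : Tendsto (fun j => z (j + 1) - z j) atTop (𝓝 0))
    (hwlim : Tendsto (fun j => w (j + 1) - w j) atTop (𝓝 0)) :
    Tendsto (fun j => infDist (-(P (z j)) - q - adjoint H (w j)) (normalCone D (z j)))
      atTop (𝓝 0) ∧
    Tendsto (fun j => infDist (H (z j) - g) (normalCone C (w j))) atTop (𝓝 0) := by
  have hPlim : Tendsto (fun j => P (z (j + 1) - z j)) atTop (𝓝 0) :=
    (P.continuous.tendsto' 0 0 (map_zero P)).comp hzlim
  have hHlim : Tendsto (fun j => H (z (j + 1) - z j)) atTop (𝓝 0) :=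
    (H.continuous.tendsto' 0 0 (map_zero H)).comp hzlim
  constructor
  · refine tendsto_infDist_normalCone_of_proj_step hDne hDcl.isComplete hDconv hα
      (d := fun j => -(P (z j) + q + adjoint H (w (j + 1)))) (fun j => ?_) hzlim ?_
    · rw [hz, smul_neg, ← sub_eq_add_neg]
    · convert hPlim.neg using 2 with j
      · rw [map_sub]; abel
      · exact neg_zero.symm
  · -- `v 0` is arbitrary, so the dual update has the extrapolated form only from step `1` on.
    rw [← tendsto_add_atTop_iff_nat 1]
    refine tendsto_infDist_normalCone_of_proj_step hCne hCcl.isComplete hCconv hα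
      (x := fun j => w (j + 1)) (r := fun j => H (z (j + 1)) - g)
      (d := fun j => H (z (j + 1) - z j) + (H (z (j + 1)) - g)) (fun j => ?_)
      ((tendsto_add_atTop_iff_nat 1).2 hwlim) ?_
    · rw [hw, hv, smul_add, add_assoc]
    · convert ((tendsto_add_atTop_iff_nat 1).2 hHlim).sub hHlim using 2 with j
      · simp only [map_sub]; abel
      · exact (sub_zero 0).symm

/-- if the limits of consecutive differences of the PIPG iterates vanish,
then the primal-dual optimality residuals converge to zero. -/
theorem stmt5 {n m : ℕ} (α : ℝ)
    (P : EuclideanSpace ℝ (Fin n) →L[ℝ] EuclideanSpace ℝ (Fin n))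
    (hPsa : IsSelfAdjoint P) (hPpsd : ∀ x, 0 ≤ ⟪P x, x⟫)
    (q : EuclideanSpace ℝ (Fin n))
    (H : EuclideanSpace ℝ (Fin n) →L[ℝ] EuclideanSpace ℝ (Fin m))
    (g : EuclideanSpace ℝ (Fin m))
    (D : Set (EuclideanSpace ℝ (Fin n)))
    (hDne : D.Nonempty) (hDcl : IsClosed D) (hDconv : Convex ℝ D)
    (K : Set (EuclideanSpace ℝ (Fin m)))
    (hKne : K.Nonempty) (hKcl : IsClosed K) (hKconv : Convex ℝ K)
    (hKcone : ∀ w ∈ K, ∀ a : ℝ, 0 ≤ a → a • w ∈ K)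
    (w v : ℕ → EuclideanSpace ℝ (Fin m))
    (z : ℕ → EuclideanSpace ℝ (Fin n))
    (hw : ∀ j : ℕ, w (j + 1) = proj (polarCone K) (v j + α • (H (z j) - g)))
    (hz : ∀ j : ℕ, z (j + 1) =
      proj D (z j - α • (P (z j) + q + (ContinuousLinearMap.adjoint H) (w (j + 1)))))
    (hv : ∀ j : ℕ, v (j + 1) = w (j + 1) + α • H (z (j + 1) - z j))
    (γ lam ν : ℝ) (hγ : 1/2 < γ) (hγ1 : γ < 1)
    (hlam : ‖P‖ ≤ lam) (hν : ‖H‖ ≤ ν) (hα0 : 0 < α)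
    (hα : α ≤ (8 - 4/γ) / (Real.sqrt (lam^2 + 16*ν^2) + lam))
    (zbar : EuclideanSpace ℝ (Fin n)) (wbar : EuclideanSpace ℝ (Fin m))
    (hzlim : Tendsto (fun j : ℕ => z (j + 1) - z j) atTop (𝓝 zbar))
    (hwlim : Tendsto (fun j : ℕ => w (j + 1) - w j) atTop (𝓝 wbar))
    (hz0 : ‖zbar‖ = 0) (hw0 : ‖wbar‖ = 0) :
    Tendsto (fun j : ℕ =>
        Metric.infDist (-(P (z j)) - q - (ContinuousLinearMap.adjoint H) (w j))
          (normalCone D (z j))) atTop (𝓝 0) ∧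
    Tendsto (fun j : ℕ =>
        Metric.infDist (H (z j) - g) (normalCone (polarCone K) (w j))) atTop (𝓝 0) := by
  obtain rfl : zbar = 0 := norm_eq_zero.1 hz0
  obtain rfl : wbar = 0 := norm_eq_zero.1 hw0
  exact stmt5_general hDne hDcl hDconv (polarCone_nonempty K) (isClosed_polarCone K)
    (convex_polarCone K) hα0 hw hz hv hzlim hwlim
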